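/- Let V be a representation of the Yangian Y(gl_n) with T_{ij}^{(r)} = 0 for all r ≥ 3, and let η ∈ V be a Y(gl_{n−1})-singular vector: T_{ij}(u)η = 0 for 1 ≤ i < j ≤ n−1 and T_{ii}(u)η = ν_i(u)η for i = 1,…,n−1, where each ν_i(u) is a monic polynomial of degree 2. Fix 1 ≤ a ≤ n−1, an integer k ≥ 1 and a complex number v. Then: (i) for 1 ≤ i ≤ n−1 with i ≠ a, T_{ii}(u)·𝒯_{na}(v,k)η = ν_i(u)·𝒯_{na}(v,k)η; (ii) for 1 ≤ i < n−1 with i ≠ a, T_{i,i+1}(u)·𝒯_{na}(v,k)η = 0; (iii) if ρ ∈ ℂ satisfies ν_a(−ρ) = 0, so that ν_a(u) = (u+ρ)q(u) for a polynomial q, then T_{aa}(u)·𝒯_{na}(−ρ,k)η = (u+ρ−k)q(u)·𝒯_{na}(−ρ,k)η, and, if moreover a < n−1, T_{a,a+1}(u)·𝒯_{na}(−ρ,k)η = 0. All identities are between End(V)-valued polynomials in u applied to vectors. -/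

import Mathlib

/-- A representation of the Yangian `Y(gl_n)` on a complex vector space `V`:
a family of operators `T r i j` (`r ≥ 1`), with `T 0 i j = δ_{ij}·id`,
satisfying the defining relations
`[T^{(r+1)}_{ij}, T^{(s)}_{kl}] − [T^{(r)}_{ij}, T^{(s+1)}_{kl}]
  = T^{(r)}_{kj} T^{(s)}_{il} − T^{(s)}_{kj} T^{(r)}_{il}`. -/
def IsYangianRep (n : ℕ) {V : Type*} [AddCommGroup V] [Module ℂ V]
    (T : ℕ → Fin n → Fin n → (V →ₗ[ℂ] V)) : Prop :=
  (∀ i j : Fin n, T 0 i j = if i = j then LinearMap.id else 0) ∧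
  (∀ r s : ℕ, ∀ i j k l : Fin n,
    (T (r + 1) i j ∘ₗ T s k l - T s k l ∘ₗ T (r + 1) i j)
      - (T r i j ∘ₗ T (s + 1) k l - T (s + 1) k l ∘ₗ T r i j)
    = T r k j ∘ₗ T s i l - T s k j ∘ₗ T r i l)

/-- The polynomial operator `T_{ij}(u) = u² δ_{ij}·id + u T^{(1)}_{ij} + T^{(2)}_{ij}`
(in a representation with `T^{(r)} = 0` for `r ≥ 3`). -/
noncomputable def Tpoly {n : ℕ} {V : Type*} [AddCommGroup V] [Module ℂ V]
    (T : ℕ → Fin n → Fin n → (V →ₗ[ℂ] V)) (i j : Fin n) (u : ℂ) : V →ₗ[ℂ] V :=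
  u ^ 2 • (if i = j then (LinearMap.id : V →ₗ[ℂ] V) else 0) + u • T 1 i j + T 2 i j

/-- The polynomial quantum minor `T^{a_1⋯a_l}_{b_1⋯b_l}(u)
= Σ_{σ ∈ S_l} sgn σ · T_{a_{σ(1)} b_1}(u) T_{a_{σ(2)} b_2}(u−1) ⋯
T_{a_{σ(l)} b_l}(u−l+1)`. -/
noncomputable def TqminorPoly {n : ℕ} {V : Type*} [AddCommGroup V] [Module ℂ V]
    (T : ℕ → Fin n → Fin n → (V →ₗ[ℂ] V)) (l : ℕ) (a b : Fin l → Fin n)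
    (u : ℂ) : V →ₗ[ℂ] V :=
  ∑ σ : Equiv.Perm (Fin l),
    (((Equiv.Perm.sign σ : ℤ) : ℂ)) •
      (List.ofFn fun s : Fin l =>
        Tpoly T (a (σ s)) (b s) (u - ((s : ℕ) : ℂ))).foldr (· ∘ₗ ·) LinearMap.id

/-- The sequence of `0`-indexed row (or column) indices `off, off+1, …, off+l-1`. -/
def idxSeq (n off l : ℕ) (h : off + l ≤ n) : Fin l → Fin n :=
  fun s => ⟨off + s.1, by have := s.isLt; omega⟩

/-- The sequence of `0`-indexed indices `off, off+1, …, off+l-2, n-1`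
(the last index replaced by `n-1`). -/
def idxSeqLast (n off l : ℕ) (h : off + l ≤ n) (hn : 1 ≤ n) : Fin l → Fin n :=
  fun s => if s.1 = l - 1 then ⟨n - 1, by omega⟩
    else ⟨off + s.1, by have := s.isLt; omega⟩

/-- The lowering operator `τ_{ra}(v) = T^{a+1⋯r}_{a⋯r−1}(v)`
(`1 ≤ a < r ≤ n`, indices in `1, …, n` as in the paper). -/
noncomputable def tauPoly {n : ℕ} {V : Type*} [AddCommGroup V] [Module ℂ V]
    (T : ℕ → Fin n → Fin n → (V →ₗ[ℂ] V)) (r a : ℕ)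
    (ha : 1 ≤ a) (har : a < r) (hr : r ≤ n) (v : ℂ) : V →ₗ[ℂ] V :=
  TqminorPoly T (r - a) (idxSeq n a (r - a) (by omega))
    (idxSeq n (a - 1) (r - a) (by omega)) v

/-- The product of lowering operators
`𝒯_{ra}(v, k) = τ_{ra}(v+k−1) ⋯ τ_{ra}(v+1) τ_{ra}(v)`
(the identity operator when `k = 0`). -/
noncomputable def TTPoly {n : ℕ} {V : Type*} [AddCommGroup V] [Module ℂ V]
    (T : ℕ → Fin n → Fin n → (V →ₗ[ℂ] V)) (r a : ℕ)
    (ha : 1 ≤ a) (har : a < r) (hr : r ≤ n) (v : ℂ) : ℕ → (V →ₗ[ℂ] V)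
  | 0 => LinearMap.id
  | k + 1 => tauPoly T r a ha har hr (v + (k : ℂ)) ∘ₗ TTPoly T r a ha har hr v k

/-!
Let `N(v)` be the quantum minor with rows `A` and columns `B`. Expanding along the first column,
one proves by induction the *fused RTT relation*
`(u - v) T_kl(u) N(v) - ∑ i, T_{A_i l}(u) N(v)[A_i ↦ k]
  = (u - v) N(v) T_kl(u) - ∑ j, N(v)[B_j ↦ l] T_{k B_j}(u)`
for all but finitely many `u`, which suffices because the operators are polynomial in `u`. If `k` is
a row of `N`, all but one of the summands on the left are minors with a repeated row and the left
side is `(u - v - 1) T_kl(u) N(v)`; columns behave in the same way on the right. For the lowering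
operator the columns are `c, …, t - 1` and the rows include `c + 1, …, t - 1`, so on a singular
vector the two factors `u - v - 1` cancel when `k > c`, while for `k < c` both sums vanish.

For `k = c` let `v` be a root of the eigenvalue `(u - v) q(u)` of `T_cc(u)` on the singular vector
`ζ`. Then every `T_cb(v)` with `b` a column kills `ζ`, hence so does every minor at `v` containing
row `c`. The left side is now `(u - v) T_cl(u) N(v) ζ` and the right side still carries
`u - v - 1`, so the eigenvalue becomes `(u - v - 1) q(u)` and its root `v + 1` is the spectral
parameter of the next factor of the product.
-/

namespace Yangian

open Equiv Finset Function Polynomial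

section Minors

variable {𝕜 R ι : Type*} [CommRing 𝕜] [Ring R] {T : ι → ι → 𝕜 → R} {m : ℕ}

/-- The quantum minor `T^{A_0⋯A_{m-1}}_{B_0⋯B_{m-1}}(v)` of a family `T i j (u)` of elements of a
ring depending on a spectral parameter `u`; rows and columns are indexed by `Fin m`, so that the
factor in column `B s` is evaluated at `v - s`. -/
def quantumMinor (T : ι → ι → 𝕜 → R) (A B : Fin m → ι) (v : 𝕜) : R :=
  ∑ σ : Perm (Fin m),
    Perm.sign σ • (List.ofFn fun s : Fin m ↦ T (A (σ s)) (B s) (v - (s : ℕ))).prod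

theorem quantumMinor_comp_perm_left (A B : Fin m → ι) (v : 𝕜) (π : Perm (Fin m)) :
    quantumMinor T (A ∘ π) B v = Perm.sign π • quantumMinor T A B v := by
  rw [quantumMinor, quantumMinor, smul_sum]
  refine Fintype.sum_equiv (Equiv.mulLeft π) _ _ fun σ ↦ ?_
  simp [smul_smul, ← mul_assoc, Int.units_mul_self]

/-- The signed minor complementary to row `p` and a removed first column: the cofactor of the
Laplace expansion `quantumMinor_cons_right`. -/
def cofactor (T : ι → ι → 𝕜 → R) (p : Fin (m + 1)) (A : Fin (m + 1) → ι) (B : Fin m → ι)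
    (v : 𝕜) : R :=
  (-1 : ℤˣ) ^ (p : ℕ) • quantumMinor T (p.removeNth A) B v

theorem cofactor_apply_zero (π : Perm (Fin (m + 1))) (A : Fin (m + 1) → ι) (B : Fin m → ι)
    (v : 𝕜) :
    cofactor T (π 0) A B v = Perm.sign π • quantumMinor T (A ∘ π ∘ Fin.succ) B v := by
  obtain ⟨⟨q, e⟩, he⟩ := Perm.decomposeFin.symm.surjective ((π 0).cycleRange * π)
  obtain rfl : q = 0 := by simpa using congr($he 0)
  have hcomp : A ∘ π ∘ Fin.succ = (π 0).removeNth A ∘ e := by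
    ext s
    have hs : (π 0).cycleRange (π s.succ) = (e s).succ := by simpa using congr($he s.succ).symm
    rw [← Equiv.eq_symm_apply, Fin.cycleRange_symm_succ] at hs
    simp [hs, Fin.removeNth]
  have hsign : Perm.sign e = (-1) ^ (π 0 : ℕ) * Perm.sign π := by
    simpa using congr(Perm.sign $he)
  rw [hcomp, quantumMinor_comp_perm_left, cofactor, hsign, smul_smul, mul_left_comm,
    Int.units_mul_self, mul_one]

theorem cofactor_swap_zero (p : Fin (m + 1)) (A : Fin (m + 1) → ι) (B : Fin m → ι) (v : 𝕜) :
    cofactor T p A B v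
      = Perm.sign (swap 0 p) • quantumMinor T (A ∘ swap 0 p ∘ Fin.succ) B v := by
  simpa using cofactor_apply_zero (T := T) (swap 0 p) A B v

theorem quantumMinor_cons_right (A : Fin (m + 1) → ι) (b : ι) (B : Fin m → ι) (v : 𝕜) :
    quantumMinor T A (Fin.cons b B) v = ∑ p, T (A p) b v * cofactor T p A B (v - 1) := by
  rw [quantumMinor, ← Perm.decomposeFin.symm.sum_comp, Fintype.sum_prod_type]
  refine sum_congr rfl fun p _ ↦ ?_
  simp only [cofactor_swap_zero, quantumMinor, smul_sum, mul_sum]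
  refine sum_congr rfl fun e _ ↦ ?_
  have hsign : Perm.sign (Perm.decomposeFin.symm (p, e)) = Perm.sign (swap 0 p) * Perm.sign e := by
    rw [Perm.decomposeFin.symm_sign, Perm.sign_swap', if_congr eq_comm rfl rfl]
  simp only [hsign, List.ofFn_succ, List.prod_cons, mul_smul_comm, smul_smul]
  simp [sub_sub, add_comm]

theorem cofactor_comp_swap {p i : Fin (m + 1)} (h : p ≠ i) (A : Fin (m + 1) → ι) (B : Fin m → ι)
    (v : 𝕜) : cofactor T p (A ∘ swap p i) B v = -cofactor T i A B v := by
  have hp := cofactor_apply_zero (T := T) (swap 0 p) (A ∘ swap p i) B v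
  have hi := cofactor_apply_zero (T := T) (swap p i * swap 0 p) A B v
  rw [swap_apply_left] at hp
  rw [Perm.mul_apply, swap_apply_left, swap_apply_left] at hi
  rw [hp, hi, map_mul, Perm.sign_swap h, neg_one_mul, Units.neg_smul, neg_neg]
  rfl

theorem cofactor_update_of_ne {p i : Fin (m + 1)} (h : p ≠ i) (A : Fin (m + 1) → ι) (k : ι)
    (B : Fin m → ι) (v : 𝕜) :
    cofactor T p (update A i k) B v = -cofactor T i (update A p k) B v := by
  have hcomp : p.removeNth (update A i k) = p.removeNth (update A p k ∘ swap p i) := by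
    ext s
    rcases eq_or_ne (p.succAbove s) i with hs | hs
    · simp [Fin.removeNth, hs]
    · simp [Fin.removeNth, hs, Fin.succAbove_ne, swap_apply_of_ne_of_ne]
  rw [cofactor, hcomp, ← cofactor, cofactor_comp_swap h]

end Minors

/-- The defining relations of the Yangian in generating-series form. -/
def SatisfiesRTT {𝕜 R ι : Type*} [CommRing 𝕜] [Ring R] [Algebra 𝕜 R] (T : ι → ι → 𝕜 → R) : Prop :=
  ∀ i j k l u v, (u - v) • ⁅T i j u, T k l v⁆ = T k j u * T i l v - T k j v * T i l u

section Columns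

variable {𝕜 R ι : Type*} [CommRing 𝕜] [Ring R] [Algebra 𝕜 R] {T : ι → ι → 𝕜 → R} {m : ℕ}

theorem SatisfiesRTT.exchange (hT : SatisfiesRTT T) (i j k l : ι) (u v : 𝕜) :
    (u - v) • (T i j u * T k l v) - T k j u * T i l v
      = (u - v) • (T k l v * T i j u) - T k j v * T i l u := by
  rw [sub_eq_sub_iff_sub_eq_sub, ← smul_sub, ← Ring.lie_def, hT]

theorem SatisfiesRTT.two_columns_antisymm (hT : SatisfiesRTT T) (i j k l : ι) (u : 𝕜) :
    T i j u * T k l (u - 1) - T k j u * T i l (u - 1)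
      = -(T i l u * T k j (u - 1) - T k l u * T i j (u - 1)) := by
  have h₁ := hT.exchange i j k l u (u - 1)
  have h₂ := hT.exchange i l k j u (u - 1)
  rw [sub_sub_cancel, one_smul, one_smul] at h₁ h₂
  rw [h₁, h₂, neg_sub]

theorem quantumMinor_comp_swap_zero_one (hT : SatisfiesRTT T) (A B : Fin (m + 2) → ι) (v : 𝕜) :
    quantumMinor T A (B ∘ swap 0 1) v = -quantumMinor T A B v := by
  rw [eq_neg_iff_add_eq_zero, quantumMinor, quantumMinor, ← sum_add_distrib]
  have hfix (s : Fin m) : swap (0 : Fin (m + 2)) 1 s.succ.succ = s.succ.succ :=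
    swap_apply_of_ne_of_ne (Fin.succ_ne_zero _) (by simp [Fin.ext_iff])
  have hsign : Perm.sign (swap (0 : Fin (m + 2)) 1) = -1 := Perm.sign_swap (by simp)
  refine sum_involution (fun σ _ ↦ σ * swap 0 1) (fun σ _ ↦ ?_) (fun σ _ _ ↦ ?_) (by simp)
    (by simp [mul_assoc])
  · have h := congr($(hT.two_columns_antisymm (A (σ 0)) (B 0) (A (σ 1)) (B 1) v) *
      (List.ofFn fun s : Fin m ↦ T (A (σ s.succ.succ)) (B s.succ.succ)
        (v - (s.succ.succ : ℕ))).prod)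
    simp only [sub_mul, neg_mul, mul_assoc] at h
    simp only [map_mul, hsign, mul_neg, mul_one, Units.neg_smul, ← smul_neg, ← smul_add,
      List.ofFn_succ, List.prod_cons, comp_apply, Perm.mul_apply, hfix, Fin.succ_zero_eq_one,
      swap_apply_left, swap_apply_right, Fin.val_zero, Fin.val_one, Nat.cast_zero, Nat.cast_one,
      sub_zero]
    rw [smul_eq_zero_iff_eq]
    linear_combination (norm := abel) h
  · simp [swap_eq_one_iff]

theorem quantumMinor_comp_swap_castSucc_succ (hT : SatisfiesRTT T) (A B : Fin (m + 1) → ι)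
    (v : 𝕜) (t : Fin m) :
    quantumMinor T A (B ∘ swap t.castSucc t.succ) v = -quantumMinor T A B v := by
  induction m generalizing v with
  | zero => exact t.elim0
  | succ m ih =>
    obtain rfl | ⟨t, rfl⟩ := t.eq_zero_or_eq_succ
    · exact quantumMinor_comp_swap_zero_one hT A B v
    · obtain ⟨b, B, rfl⟩ : ∃ b B', B = Fin.cons b B' := ⟨_, _, (Fin.cons_self_tail B).symm⟩
      have hcomp : (Fin.cons b B : Fin (m + 2) → ι) ∘ swap t.succ.castSucc t.succ.succ
          = Fin.cons b (B ∘ swap t.castSucc t.succ) := by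
        ext s
        cases s using Fin.cases with
        | zero =>
          rw [Fin.castSucc_succ, comp_apply,
            swap_apply_of_ne_of_ne (Fin.succ_ne_zero _).symm (Fin.succ_ne_zero _).symm]
          simp
        | succ s =>
          rw [Fin.castSucc_succ, comp_apply, (Fin.succ_injective _).swap_apply]
          simp
      simp only [hcomp, quantumMinor_cons_right, cofactor, ih, smul_neg, mul_neg, sum_neg_distrib]

theorem quantumMinor_comp_perm_right (hT : SatisfiesRTT T) (A B : Fin m → ι) (v : 𝕜)
    (π : Perm (Fin m)) : quantumMinor T A (B ∘ π) v = Perm.sign π • quantumMinor T A B v := by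
  cases m with
  | zero => simp [Subsingleton.elim π 1]
  | succ m =>
    have hπ : π ∈ Submonoid.closure (Set.range fun t : Fin m ↦ swap t.castSucc t.succ) := by
      rw [Perm.mclosure_swap_castSucc_succ]; trivial
    induction hπ using Submonoid.closure_induction generalizing B with
    | mem _ h =>
      obtain ⟨t, rfl⟩ := h
      rw [quantumMinor_comp_swap_castSucc_succ hT, Perm.sign_swap Fin.castSucc_lt_succ.ne,
        Units.neg_smul, one_smul]
    | one => simp
    | mul π π' _ _ h h' => rw [Perm.coe_mul, ← comp_assoc, h', h, map_mul, smul_smul, mul_comm]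

end Columns

section RepeatedIndices

variable {𝕜 R ι : Type*} [CommRing 𝕜] [Ring R] [IsAddTorsionFree R] {T : ι → ι → 𝕜 → R}
  {m : ℕ} {i j : Fin m}

theorem quantumMinor_eq_zero_of_row_eq {A : Fin m → ι} (hij : i ≠ j) (h : A i = A j)
    (B : Fin m → ι) (v : 𝕜) : quantumMinor T A B v = 0 := by
  have hA : A ∘ swap i j = A := by simp [comp_swap_eq_update, h]
  rw [← self_eq_neg]
  nth_rw 1 [← hA]
  rw [quantumMinor_comp_perm_left, Perm.sign_swap hij, Units.neg_smul, one_smul]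

theorem quantumMinor_eq_zero_of_col_eq [Algebra 𝕜 R] (hT : SatisfiesRTT T) {B : Fin m → ι}
    (hij : i ≠ j) (h : B i = B j) (A : Fin m → ι) (v : 𝕜) : quantumMinor T A B v = 0 := by
  have hB : B ∘ swap i j = B := by simp [comp_swap_eq_update, h]
  rw [← self_eq_neg]
  nth_rw 1 [← hB]
  rw [quantumMinor_comp_perm_right hT, Perm.sign_swap hij, Units.neg_smul, one_smul]

end RepeatedIndices

section FusedRelation

variable {𝕜 R ι : Type*} [CommRing 𝕜] [Ring R] [Algebra 𝕜 R] {T : ι → ι → 𝕜 → R} {m : ℕ}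

/-- A matrix entry of the left-hand side of the fused RTT relation between `T k l (u)` and the
quantum minor with rows `A` and columns `B` at `v`. -/
def fusedRTTLeft (T : ι → ι → 𝕜 → R) (A B : Fin m → ι) (k l : ι) (u v : 𝕜) : R :=
  (u - v) • (T k l u * quantumMinor T A B v)
    - ∑ i, T (A i) l u * quantumMinor T (update A i k) B v

/-- A matrix entry of the right-hand side of the fused RTT relation between `T k l (u)` and the
quantum minor with rows `A` and columns `B` at `v`. -/
def fusedRTTRight (T : ι → ι → 𝕜 → R) (A B : Fin m → ι) (k l : ι) (u v : 𝕜) : R :=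
  (u - v) • (quantumMinor T A B v * T k l u)
    - ∑ j, quantumMinor T A (update B j l) v * T k (B j) u

theorem sum_compl_singleton_eq_sum_succAbove {M : Type*} [AddCommMonoid M] (p : Fin (m + 1))
    (f : Fin (m + 1) → M) : ∑ i ∈ {p}ᶜ, f i = ∑ q, f (p.succAbove q) := by
  rw [← Fin.image_succAbove_univ, sum_image p.succAbove_right_injective.injOn]

theorem neg_one_pow_smul_fusedRTTLeft_removeNth (p : Fin (m + 1)) (A : Fin (m + 1) → ι)
    (B : Fin m → ι) (k l : ι) (u v : 𝕜) :
    (-1 : ℤˣ) ^ (p : ℕ) • fusedRTTLeft T (p.removeNth A) B k l u v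
      = (u - v) • (T k l u * cofactor T p A B v)
        - ∑ i ∈ {p}ᶜ, T (A i) l u * cofactor T p (update A i k) B v := by
  have hupdate (q : Fin m) :
      p.removeNth (update A (p.succAbove q) k) = update (p.removeNth A) q k :=
    update_comp_eq_of_injective A p.succAbove_right_injective q k
  simp only [sum_compl_singleton_eq_sum_succAbove, fusedRTTLeft, cofactor, hupdate, smul_sub,
    smul_sum, mul_smul_comm, smul_comm _ (u - v)]
  rfl

theorem fusedRTTLeft_cons_right (A : Fin (m + 1) → ι) (b : ι) (B : Fin m → ι) (k l : ι)
    (u v : 𝕜) :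
    fusedRTTLeft T A (Fin.cons b B) k l u v
      = ∑ p, ((u - v) • (T k l u * T (A p) b v) - T (A p) l u * T k b v)
          * cofactor T p A B (v - 1)
        - ∑ p, ∑ i ∈ {p}ᶜ, T (A i) l u * T (A p) b v
          * cofactor T p (update A i k) B (v - 1) := by
  rw [sum_comm' (t' := univ) (s' := fun i ↦ {i}ᶜ) (by simp [eq_comm])]
  have hlaplace (i : Fin (m + 1)) : quantumMinor T (update A i k) (Fin.cons b B) v
      = T k b v * cofactor T i A B (v - 1)
        + ∑ p ∈ {i}ᶜ, T (A p) b v * cofactor T p (update A i k) B (v - 1) := by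
    rw [quantumMinor_cons_right, Fintype.sum_eq_add_sum_compl i]
    congr 1
    · rw [update_self, cofactor, cofactor, Fin.removeNth_update]
    · refine sum_congr rfl fun p hp ↦ ?_
      rw [update_of_ne (by simpa using hp)]
  simp only [fusedRTTLeft, hlaplace, quantumMinor_cons_right, mul_add, sum_add_distrib, mul_sum,
    smul_sum, sub_mul, smul_mul_assoc, mul_assoc, sum_sub_distrib, sub_add_eq_sub_sub]

theorem smul_fusedRTTLeft_cons_right (hT : SatisfiesRTT T) (A : Fin (m + 1) → ι) (b : ι)
    (B : Fin m → ι) (k l : ι) (u v : 𝕜) :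
    (u - v + 1) • fusedRTTLeft T A (Fin.cons b B) k l u v
      = (u - v) • ∑ p : Fin (m + 1), T (A p) b v *
            ((-1 : ℤˣ) ^ (p : ℕ) • fusedRTTLeft T (p.removeNth A) B k l u (v - 1))
        - ∑ p : Fin (m + 1), T (A p) l v *
            ((-1 : ℤˣ) ^ (p : ℕ) • fusedRTTLeft T (p.removeNth A) B k b u (v - 1)) := by
  have hx : u - (v - 1) = u - v + 1 := by ring
  have hlaplace (c d : ι) : ∑ p : Fin (m + 1), T (A p) c v *
        ((-1 : ℤˣ) ^ (p : ℕ) • fusedRTTLeft T (p.removeNth A) B k d u (v - 1))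
      = (u - v + 1) • ∑ p, T (A p) c v * T k d u * cofactor T p A B (v - 1)
        - ∑ p, ∑ i ∈ {p}ᶜ, T (A p) c v * T (A i) d u
          * cofactor T p (update A i k) B (v - 1) := by
    simp only [neg_one_pow_smul_fusedRTTLeft_removeNth, hx, mul_sub, sum_sub_distrib, mul_sum,
      smul_sum, mul_smul_comm, mul_assoc]
  have hexch (i j : ι) (d : R) : (u - v) • (T j b v * T i l u * d) - T j l v * T i b u * d
      = (u - v) • (T i l u * T j b v * d) - T j l u * T i b v * d := by
    rw [← smul_mul_assoc, ← sub_mul, ← hT.exchange, sub_mul, smul_mul_assoc]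
  have hantisymm :
      ∑ p, ∑ i ∈ {p}ᶜ, T (A p) l u * T (A i) b v * cofactor T p (update A i k) B (v - 1)
        = -∑ p, ∑ i ∈ {p}ᶜ, T (A i) l u * T (A p) b v
          * cofactor T p (update A i k) B (v - 1) := by
    rw [sum_comm' (t' := univ) (s' := fun i ↦ {i}ᶜ) (by simp [eq_comm])]
    simp only [← sum_neg_distrib, ← mul_neg]
    refine sum_congr rfl fun p _ ↦ sum_congr rfl fun i hi ↦ congrArg _ ?_
    exact cofactor_update_of_ne (by simpa using hi) A k B (v - 1)
  have hdiag := congr(∑ p, $(hexch k (A p) (cofactor T p A B (v - 1))))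
  have hoff := congr(∑ p, ∑ i ∈ {p}ᶜ,
    $(hexch (A i) (A p) (cofactor T p (update A i k) B (v - 1))))
  rw [fusedRTTLeft_cons_right, hlaplace, hlaplace]
  simp only [sub_mul, smul_mul_assoc, sum_sub_distrib, ← smul_sum] at hdiag hoff ⊢
  linear_combination (norm := module) -(u - v + 1) • hdiag + hoff - hantisymm

theorem smul_fusedRTTRight_cons_right (hT : SatisfiesRTT T) (A : Fin (m + 1) → ι) (b : ι)
    (B : Fin m → ι) (k l : ι) (u v : 𝕜) :
    (u - v + 1) • fusedRTTRight T A (Fin.cons b B) k l u v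
      = (u - v) • ∑ p : Fin (m + 1), T (A p) b v *
            ((-1 : ℤˣ) ^ (p : ℕ) • fusedRTTRight T (p.removeNth A) B k l u (v - 1))
        - ∑ p : Fin (m + 1), T (A p) l v *
            ((-1 : ℤˣ) ^ (p : ℕ) • fusedRTTRight T (p.removeNth A) B k b u (v - 1)) := by
  have hx : u - (v - 1) = u - v + 1 := by ring
  have hlaplace (c d : ι) : ∑ p : Fin (m + 1), T (A p) c v *
        ((-1 : ℤˣ) ^ (p : ℕ) • fusedRTTRight T (p.removeNth A) B k d u (v - 1))
      = (u - v + 1) • (quantumMinor T A (Fin.cons c B) v * T k d u)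
        - ∑ j, quantumMinor T A (Fin.cons c (update B j d)) v * T k (B j) u := by
    simp only [quantumMinor_cons_right, fusedRTTRight, cofactor, hx, mul_sub, smul_sub, mul_sum,
      sum_mul, smul_sum, sum_sub_distrib, mul_smul_comm, smul_mul_assoc, mul_assoc,
      smul_comm _ (u - v + 1)]
    rw [sum_comm]
  have hswap (j : Fin m) : quantumMinor T A (Fin.cons l (update B j b)) v
      = -quantumMinor T A (Fin.cons b (update B j l)) v := by
    have hcomp : (Fin.cons l (update B j b) : Fin (m + 1) → ι)
        = Fin.cons b (update B j l) ∘ swap 0 j.succ := by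
      rw [comp_swap_eq_update]
      simp [← Fin.cons_update]
    rw [hcomp, quantumMinor_comp_perm_right hT, Perm.sign_swap (Fin.succ_ne_zero _).symm,
      Units.neg_smul, one_smul]
  rw [hlaplace, hlaplace]
  simp only [hswap, fusedRTTRight, Fin.sum_univ_succ, Fin.update_cons_zero,
    Fin.cons_zero, Fin.cons_succ, ← Fin.cons_update, neg_mul, sum_neg_distrib]
  module

theorem quantumMinor_cons_cons (a b : ι) (A B : Fin m → ι) (v : 𝕜) :
    quantumMinor T (Fin.cons a A) (Fin.cons b B) v = fusedRTTLeft T A B a b v (v - 1) := by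
  have hcofactor (i : Fin m) : cofactor T i.succ (Fin.cons a A) B (v - 1)
      = -quantumMinor T (update A i a) B (v - 1) := by
    have h := cofactor_update_of_ne (T := T) (Fin.succ_ne_zero i) (Fin.cons a A) a B (v - 1)
    rw [Fin.update_cons_zero, ← Fin.cons_update] at h
    simpa [cofactor] using h
  have hzero : cofactor T 0 (Fin.cons a A) B (v - 1) = quantumMinor T A B (v - 1) := by
    simp [cofactor]
  simp only [quantumMinor_cons_right, Fin.sum_univ_succ, hcofactor, hzero, fusedRTTLeft,
    Fin.cons_zero, Fin.cons_succ, mul_neg, sum_neg_distrib, sub_sub_cancel, one_smul]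
  exact (sub_eq_add_neg _ _).symm

variable [IsAddTorsionFree R]

theorem fusedRTTLeft_row (A B : Fin m → ι) (p : Fin m) (l : ι) (u v : 𝕜) :
    fusedRTTLeft T A B (A p) l u v = (u - v - 1) • (T (A p) l u * quantumMinor T A B v) := by
  rw [fusedRTTLeft, Fintype.sum_eq_single p, update_eq_self, sub_smul (u - v), one_smul]
  intro i hi
  rw [quantumMinor_eq_zero_of_row_eq hi (by simp [update_of_ne hi.symm]), mul_zero]

theorem fusedRTTRight_col (hT : SatisfiesRTT T) (A B : Fin m → ι) (k : ι) (q : Fin m) (u v : 𝕜) :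
    fusedRTTRight T A B k (B q) u v = (u - v - 1) • (quantumMinor T A B v * T k (B q) u) := by
  rw [fusedRTTRight, Fintype.sum_eq_single q, update_eq_self, sub_smul (u - v), one_smul]
  intro j hj
  rw [quantumMinor_eq_zero_of_col_eq hT hj (by simp [update_of_ne hj.symm]), zero_mul]

end FusedRelation

section FusedRelationOverField

variable {𝕜 R ι : Type*} [Field 𝕜] [Ring R] [Algebra 𝕜 R] {T : ι → ι → 𝕜 → R} {m : ℕ}

theorem fusedRTTLeft_eq_fusedRTTRight (hT : SatisfiesRTT T) (A B : Fin m → ι) (k l : ι) {u v : 𝕜}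
    (huv : ∀ s < m, u ≠ v - (s + 1)) :
    fusedRTTLeft T A B k l u v = fusedRTTRight T A B k l u v := by
  induction m generalizing k l v with
  | zero => simp [fusedRTTLeft, fusedRTTRight, quantumMinor]
  | succ m ih =>
    have hx : u - v + 1 ≠ 0 := fun h ↦ huv 0 m.succ_pos (by push_cast; linear_combination h)
    have ih' (p : Fin (m + 1)) (d : ι) :=
      ih (p.removeNth A) (Fin.tail B) k d (v := v - 1) fun s hs h ↦
        huv (s + 1) (by lia) (by push_cast; linear_combination h)
    rw [← Fin.cons_self_tail B]
    refine smul_right_injective R hx ?_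
    simp only [smul_fusedRTTLeft_cons_right hT, smul_fusedRTTRight_cons_right hT, ih']

theorem eventually_fusedRTTLeft_eq_fusedRTTRight (hT : SatisfiesRTT T) (A B : Fin m → ι) (k l : ι)
    (v : 𝕜) :
    ∀ᶠ u in Filter.cofinite, fusedRTTLeft T A B k l u v = fusedRTTRight T A B k l u v := by
  have h : ∀ᶠ u in Filter.cofinite, ∀ s ∈ range m, u ≠ v - (s + 1) :=
    (Filter.eventually_all_finset _).2 fun s _ ↦ Filter.eventually_cofinite_ne _
  filter_upwards [h] with u hu
  exact fusedRTTLeft_eq_fusedRTTRight hT A B k l (by simpa using hu)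

theorem quantumMinor_cons_cons_eq_fusedRTTRight [CharZero 𝕜] (hT : SatisfiesRTT T)
    (a b : ι) (A B : Fin m → ι) (v : 𝕜) :
    quantumMinor T (Fin.cons a A) (Fin.cons b B) v = fusedRTTRight T A B a b v (v - 1) := by
  rw [quantumMinor_cons_cons, fusedRTTLeft_eq_fusedRTTRight hT]
  intro s _ h
  exact Nat.cast_add_one_ne_zero (R := 𝕜) (s + 1) (by push_cast; linear_combination h)

end FusedRelationOverField

section WeaklyPolynomial

variable {𝕜 V : Type*} [Field 𝕜] [AddCommGroup V] [Module 𝕜 V]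

/-- A vector-valued function of the spectral parameter all of whose coordinates are polynomials,
without a common bound on their degrees. -/
def IsWeaklyPolynomial (f : 𝕜 → V) : Prop :=
  ∀ φ : Module.Dual 𝕜 V, ∃ p : 𝕜[X], ∀ u, φ (f u) = p.eval u

theorem IsWeaklyPolynomial.eq_eval_smul [Infinite 𝕜] {f : 𝕜 → V} (hf : IsWeaklyPolynomial f)
    {p : 𝕜[X]} {ζ : V} (h : ∀ᶠ u in Filter.cofinite, f u = p.eval u • ζ) (u : 𝕜) :
    f u = p.eval u • ζ := by
  rw [← sub_eq_zero, ← Module.forall_dual_apply_eq_zero_iff 𝕜]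
  intro φ
  obtain ⟨q, hq⟩ := hf φ
  have hqp : q = p * C (φ ζ) := eq_of_infinite_eval_eq _ _ <|
    (Filter.frequently_cofinite_iff_infinite.1 h.frequently).mono fun w hw ↦ by simp_all [← hq]
  simp [hq, hqp]

end WeaklyPolynomial

section RowSingular

variable {𝕜 V ι : Type*} [Field 𝕜] [AddCommGroup V] [Module 𝕜 V] [LinearOrder ι]
  {T : ι → ι → 𝕜 → Module.End 𝕜 V} {t k l : ι} {μ : 𝕜[X]} {ζ : V}

/-- The part of the singular-vector condition for the subalgebra with indices below `t` which
involves row `k`: on `ζ`, the operators `T k l u` with `k < l < t` vanish and `T k k u` acts by the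
polynomial `μ`. -/
def IsRowSingular (T : ι → ι → 𝕜 → Module.End 𝕜 V) (t k : ι) (μ : 𝕜[X]) (ζ : V) : Prop :=
  ∀ l ∈ Set.Ico k t, ∀ u, T k l u ζ = (if l = k then μ else 0).eval u • ζ

theorem isRowSingular_iff : IsRowSingular T t k μ ζ ↔
    (k < t → ∀ u, T k k u ζ = μ.eval u • ζ) ∧ ∀ l ∈ Set.Ioo k t, ∀ u, T k l u ζ = 0 := by
  refine ⟨fun h ↦ ⟨fun hk ↦ ?_, fun l hl ↦ ?_⟩, fun ⟨hself, hzero⟩ l hl ↦ ?_⟩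
  · simpa using h k ⟨le_rfl, hk⟩
  · simpa [hl.1.ne'] using h l (Set.Ioo_subset_Ico_self hl)
  · obtain rfl | hkl := hl.1.eq_or_lt
    · simpa using hself hl.2
    · simpa [hkl.ne'] using hzero l ⟨hkl, hl.2⟩

theorem IsRowSingular.apply_self (h : IsRowSingular T t k μ ζ) (hk : k < t) (u : 𝕜) :
    T k k u ζ = μ.eval u • ζ :=
  (isRowSingular_iff.1 h).1 hk u

theorem IsRowSingular.apply_eq_zero (h : IsRowSingular T t k μ ζ) (hl : l ∈ Set.Ioo k t) (u : 𝕜) :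
    T k l u ζ = 0 :=
  (isRowSingular_iff.1 h).2 l hl u

end RowSingular

section Action

variable {𝕜 V ι : Type*} [Field 𝕜] [CharZero 𝕜] [AddCommGroup V] [Module 𝕜 V]
  {T : ι → ι → 𝕜 → Module.End 𝕜 V} {m : ℕ} {A B : Fin m → ι} {k l : ι} {u v : 𝕜} {ζ : V}

theorem quantumMinor_apply_eq_zero (hT : SatisfiesRTT T) (p : Fin m)
    (h : ∀ j, T (A p) (B j) v ζ = 0) : quantumMinor T A B v ζ = 0 := by
  obtain _ | m := m
  · exact p.elim0
  have hrow (A' : Fin m → ι) : quantumMinor T (Fin.cons (A p) A') B v ζ = 0 := by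
    rw [← Fin.cons_self_tail B, quantumMinor_cons_cons_eq_fusedRTTRight hT]
    simp [fusedRTTRight, Fin.tail, h]
  have hswap : quantumMinor T (A ∘ swap 0 p) B v ζ = 0 := by
    rw [← Fin.cons_self_tail (A ∘ swap 0 p)]
    simpa using hrow _
  rwa [quantumMinor_comp_perm_left, Units.smul_def, LinearMap.smul_apply,
    ← Units.smul_def, smul_eq_zero_iff_eq] at hswap

theorem fusedRTTLeft_apply (hT : SatisfiesRTT T) (h : ∀ j, T k (B j) v ζ = 0) :
    fusedRTTLeft T A B k l u v ζ = (u - v) • T k l u (quantumMinor T A B v ζ) := by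
  have hzero (i : Fin m) : quantumMinor T (update A i k) B v ζ = 0 :=
    quantumMinor_apply_eq_zero hT i (by simpa using h)
  simp [fusedRTTLeft, hzero]

variable [LinearOrder ι] {t : ι} {μ : 𝕜[X]}

theorem IsRowSingular.quantumMinor_of_lt (hT : SatisfiesRTT T)
    (hpoly : ∀ i j ζ, IsWeaklyPolynomial fun u ↦ T i j u ζ) (h : IsRowSingular T t k μ ζ)
    (hB : ∀ j, B j ∈ Set.Ioo k t) (A : Fin m → ι) (v : 𝕜) :
    IsRowSingular T t k μ (quantumMinor T A B v ζ) := by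
  intro l hl
  have hzero (u : 𝕜) (j : Fin m) : T k (B j) u ζ = 0 := h.apply_eq_zero (hB j) u
  refine (hpoly k l _).eq_eval_smul ?_
  filter_upwards [eventually_fusedRTTLeft_eq_fusedRTTRight hT A B k l v,
    Filter.eventually_cofinite_ne v] with u hu huv
  refine smul_right_injective V (sub_ne_zero.2 huv) ?_
  simpa [fusedRTTLeft_apply hT (hzero v), fusedRTTRight, hzero u, h l hl u] using congr($hu ζ)

theorem IsRowSingular.quantumMinor_of_mem (hT : SatisfiesRTT T)
    (hpoly : ∀ i j ζ, IsWeaklyPolynomial fun u ↦ T i j u ζ) (h : IsRowSingular T t k μ ζ)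
    (hA : k ∈ Set.range A) (hB : Set.Ico k t ⊆ Set.range B) (v : 𝕜) :
    IsRowSingular T t k μ (quantumMinor T A B v ζ) := by
  have := IsAddTorsionFree.of_isTorsionFree 𝕜 (Module.End 𝕜 V)
  intro l hl
  obtain ⟨p, rfl⟩ := hA
  obtain ⟨q, rfl⟩ := hB hl
  refine (hpoly _ _ _).eq_eval_smul ?_
  filter_upwards [eventually_fusedRTTLeft_eq_fusedRTTRight hT A B (A p) (B q) v,
    Filter.eventually_cofinite_ne (v + 1)] with u hu huv
  have hx : u - v - 1 ≠ 0 := fun hx ↦ huv (by linear_combination hx)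
  refine smul_right_injective V hx ?_
  rw [fusedRTTLeft_row, fusedRTTRight_col hT] at hu
  simpa [h _ hl u] using congr($hu ζ)

theorem IsRowSingular.quantumMinor_self {q : 𝕜[X]} (hT : SatisfiesRTT T)
    (hpoly : ∀ i j ζ, IsWeaklyPolynomial fun u ↦ T i j u ζ)
    (h : IsRowSingular T t k ((X - C v) * q) ζ) (hB : Set.range B = Set.Ico k t) (A : Fin m → ι) :
    IsRowSingular T t k ((X - C (v + 1)) * q) (quantumMinor T A B v ζ) := by
  have := IsAddTorsionFree.of_isTorsionFree 𝕜 (Module.End 𝕜 V)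
  intro l hl
  have hzero (j : Fin m) : T k (B j) v ζ = 0 := by
    rw [h (B j) (hB ▸ Set.mem_range_self j)]
    split_ifs <;> simp
  obtain ⟨j, rfl⟩ := hB.ge hl
  refine (hpoly _ _ _).eq_eval_smul ?_
  filter_upwards [eventually_fusedRTTLeft_eq_fusedRTTRight hT A B k (B j) v,
    Filter.eventually_cofinite_ne v] with u hu huv
  refine smul_right_injective V (sub_ne_zero.2 huv) ?_
  have hscalar : (u - v - 1) * (if B j = k then (X - C v) * q else 0).eval u
      = (u - v) * (if B j = k then (X - C (v + 1)) * q else 0).eval u := by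
    split_ifs
    · simp only [eval_mul, eval_sub, eval_X, eval_C]
      ring
    · simp
  rw [fusedRTTRight_col hT] at hu
  simpa [fusedRTTLeft_apply hT hzero, h _ hl u, smul_smul, hscalar] using congr($hu ζ)

end Action

/-- The product `quantumMinor T A B (v + k - 1) * ⋯ * quantumMinor T A B v` of quantum minors with
the same rows and columns. -/
def quantumMinorProd {𝕜 R ι : Type*} [CommRing 𝕜] [Ring R] {m : ℕ} (T : ι → ι → 𝕜 → R)
    (A B : Fin m → ι) (v : 𝕜) : ℕ → R
  | 0 => 1
  | k + 1 => quantumMinor T A B (v + k) * quantumMinorProd T A B v k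

section Products

variable {𝕜 V ι : Type*} [Field 𝕜] [CharZero 𝕜] [AddCommGroup V] [Module 𝕜 V] [LinearOrder ι]
  {T : ι → ι → 𝕜 → Module.End 𝕜 V} {m : ℕ} {A B : Fin m → ι} {c t i : ι} {μ q : 𝕜[X]} {v : 𝕜}
  {ζ : V}

theorem IsRowSingular.quantumMinorProd_of_ne (hT : SatisfiesRTT T)
    (hpoly : ∀ i j ζ, IsWeaklyPolynomial fun u ↦ T i j u ζ) (h : IsRowSingular T t i μ ζ)
    (hic : i ≠ c) (hA : Set.Ioo c t ⊆ Set.range A) (hB : Set.range B = Set.Ico c t) (v : 𝕜)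
    (k : ℕ) : IsRowSingular T t i μ (quantumMinorProd T A B v k ζ) := by
  induction k with
  | zero => exact h
  | succ k ih =>
    obtain hlt | hgt := hic.lt_or_gt
    · exact ih.quantumMinor_of_lt hT hpoly
        (fun j ↦ Set.Ico_subset_Ioo_left hlt (hB ▸ Set.mem_range_self j)) A _
    · by_cases hit : i < t
      · exact ih.quantumMinor_of_mem hT hpoly (hA ⟨hgt, hit⟩)
          (hB ▸ Set.Ico_subset_Ico_left hgt.le) _
      · intro l hl
        exact absurd (hl.1.trans_lt hl.2) hit

theorem IsRowSingular.quantumMinorProd_self (hT : SatisfiesRTT T)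
    (hpoly : ∀ i j ζ, IsWeaklyPolynomial fun u ↦ T i j u ζ)
    (h : IsRowSingular T t c ((X - C v) * q) ζ) (hB : Set.range B = Set.Ico c t)
    (A : Fin m → ι) (k : ℕ) :
    IsRowSingular T t c ((X - C (v + k)) * q) (quantumMinorProd T A B v k ζ) := by
  induction k with
  | zero => simpa [quantumMinorProd] using h
  | succ k ih =>
    rw [Nat.cast_succ, ← add_assoc]
    exact ih.quantumMinor_self hT hpoly hB A

end Products

section Level2

variable {n : ℕ} {V : Type*} [AddCommGroup V] [Module ℂ V]
  {T : ℕ → Fin n → Fin n → (V →ₗ[ℂ] V)}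

theorem satisfiesRTT_Tpoly (hT : IsYangianRep n T)
    (hvan : ∀ r : ℕ, 3 ≤ r → ∀ i j : Fin n, T r i j = 0) :
    SatisfiesRTT (R := Module.End ℂ V) (Tpoly T) := by
  intro i j k l u v
  obtain ⟨hzero, hrel⟩ := hT
  have hscalar (i j : Fin n) : T 0 i j = (if i = j then (1 : ℂ) else 0) • LinearMap.id := by
    rw [hzero, ite_smul, one_smul, zero_smul]
  have hTpoly (i j : Fin n) (u : ℂ) : Tpoly T i j u = u ^ 2 • T 0 i j + u • T 1 i j + T 2 i j := by
    rw [hzero, Tpoly]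
  have h := congr(∑ r ∈ range 3, ∑ s ∈ range 3, (u ^ (2 - r) * v ^ (2 - s)) •
    $(hrel r s i j k l))
  simp only [sum_range_succ, sum_range_zero, zero_add, Nat.reduceAdd, Nat.reduceSub, hvan 3 le_rfl,
    hscalar, pow_zero, pow_one, one_mul, mul_one, one_smul, LinearMap.comp_smul,
    LinearMap.smul_comp, LinearMap.comp_id, LinearMap.id_comp, LinearMap.comp_zero,
    LinearMap.zero_comp] at h
  simp only [hTpoly, hscalar, Ring.lie_def, Module.End.mul_eq_comp, LinearMap.comp_add,
    LinearMap.add_comp, LinearMap.comp_smul, LinearMap.smul_comp, LinearMap.comp_id,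
    LinearMap.id_comp]
  linear_combination (norm := module) h

theorem isWeaklyPolynomial_Tpoly_apply (i j : Fin n) (ζ : V) :
    IsWeaklyPolynomial fun u ↦ Tpoly T i j u ζ := fun φ ↦
  ⟨C (φ (if i = j then ζ else 0)) * X ^ 2 + C (φ (T 1 i j ζ)) * X + C (φ (T 2 i j ζ)), fun u ↦ by
    split_ifs with h <;> simp [Tpoly, h, mul_comm (φ _)]⟩

theorem TqminorPoly_eq_quantumMinor (l : ℕ) (A B : Fin l → Fin n) (v : ℂ) :
    TqminorPoly T l A B v = quantumMinor (R := Module.End ℂ V) (Tpoly T) A B v :=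
  sum_congr rfl fun _ _ ↦ Int.cast_smul_eq_zsmul ℂ _ _

theorem TTPoly_eq_quantumMinorProd (r a : ℕ) (ha : 1 ≤ a) (har : a < r) (hr : r ≤ n) (v : ℂ)
    (k : ℕ) : TTPoly T r a ha har hr v k
      = quantumMinorProd (R := Module.End ℂ V) (Tpoly T) (idxSeq n a (r - a) (by lia))
        (idxSeq n (a - 1) (r - a) (by lia)) v k := by
  induction k with
  | zero => rfl
  | succ k ih => rw [TTPoly, ih, tauPoly, TqminorPoly_eq_quantumMinor]; rfl

theorem mem_range_idxSeq {off l : ℕ} (h : off + l ≤ n) {i : Fin n} :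
    i ∈ Set.range (idxSeq n off l h) ↔ (i : ℕ) ∈ Set.Ico off (off + l) := by
  constructor
  · rintro ⟨s, rfl⟩
    simp [idxSeq]
  · rintro ⟨h₁, h₂⟩
    exact ⟨⟨i - off, by lia⟩, Fin.ext (by simp [idxSeq, h₁])⟩

end Level2

end Yangian

theorem lowering_operator_action_on_singular_general {𝕜 V ι : Type*} [Field 𝕜] [CharZero 𝕜]
    [AddCommGroup V] [Module 𝕜 V] [LinearOrder ι] {T : ι → ι → 𝕜 → Module.End 𝕜 V}
    (hT : Yangian.SatisfiesRTT T)
    (hpoly : ∀ i j ζ, Yangian.IsWeaklyPolynomial fun u ↦ T i j u ζ) {m : ℕ} {A B : Fin m → ι}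
    {c t : ι} (hA : Set.Ioo c t ⊆ Set.range A) (hB : Set.range B = Set.Ico c t)
    {ν : ι → Polynomial 𝕜} {ζ : V} (hζ : ∀ i, Yangian.IsRowSingular T t i (ν i) ζ) (k : ℕ)
    (v : 𝕜) :
    (∀ i ≠ c, Yangian.IsRowSingular T t i (ν i) (Yangian.quantumMinorProd T A B v k ζ)) ∧
      ∀ q, ν c = (Polynomial.X - Polynomial.C v) * q →
        Yangian.IsRowSingular T t c ((Polynomial.X - Polynomial.C (v + k)) * q)
          (Yangian.quantumMinorProd T A B v k ζ) :=
  ⟨fun i hi ↦ (hζ i).quantumMinorProd_of_ne hT hpoly hi hA hB v k,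
    fun _ hq ↦ (hq ▸ hζ c).quantumMinorProd_self hT hpoly hB A k⟩

/-- Let `η` be a `Y(gl_{n−1})`-singular vector:
`T_{ij}(u)η = 0` for `1 ≤ i < j ≤ n−1` and `T_{ii}(u)η = ν_i(u)η` for
`i = 1, …, n−1`, with `ν_i` monic of degree `2`.  Fix `1 ≤ a ≤ n−1`, `k ≥ 1`
and `v ∈ ℂ` (indices `a`, `i` as in the paper, running over `1, …, n`).  Then:
(i) for `1 ≤ i ≤ n−1`, `i ≠ a`: `T_{ii}(u) 𝒯_{na}(v,k)η = ν_i(u) 𝒯_{na}(v,k)η`;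
(ii) for `1 ≤ i < n−1`, `i ≠ a`: `T_{i,i+1}(u) 𝒯_{na}(v,k)η = 0`;
(iii) if `ν_a(−ρ) = 0`, so that `ν_a(u) = (u+ρ)q(u)`, then
`T_{aa}(u) 𝒯_{na}(−ρ,k)η = (u+ρ−k)q(u) 𝒯_{na}(−ρ,k)η` and, if `a < n−1`,
`T_{a,a+1}(u) 𝒯_{na}(−ρ,k)η = 0`. -/
theorem lowering_operator_action_on_singular
    (n : ℕ) {V : Type*} [AddCommGroup V] [Module ℂ V]
    (T : ℕ → Fin n → Fin n → (V →ₗ[ℂ] V)) (hT : IsYangianRep n T)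
    (hvan : ∀ r : ℕ, 3 ≤ r → ∀ i j : Fin n, T r i j = 0)
    (ν : Fin n → Polynomial ℂ)
    (hmonic : ∀ i : Fin n, (i : ℕ) < n - 1 → (ν i).Monic)
    (hdeg : ∀ i : Fin n, (i : ℕ) < n - 1 → (ν i).natDegree = 2)
    (η : V)
    (hsing : ∀ u : ℂ, ∀ i j : Fin n, i < j → (j : ℕ) < n - 1 → Tpoly T i j u η = 0)
    (hdiagν : ∀ u : ℂ, ∀ i : Fin n, (i : ℕ) < n - 1 →
      Tpoly T i i u η = ((ν i).eval u) • η)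
    (a : ℕ) (ha1 : 1 ≤ a) (ha2 : a ≤ n - 1) (k : ℕ) (hk : 1 ≤ k) (v : ℂ) :
    (∀ i : ℕ, ∀ hi1 : 1 ≤ i, ∀ hi2 : i ≤ n - 1, i ≠ a → ∀ u : ℂ,
      Tpoly T ⟨i - 1, by omega⟩ ⟨i - 1, by omega⟩ u
          (TTPoly T n a ha1 (by omega) (by omega) v k η)
        = ((ν ⟨i - 1, by omega⟩).eval u) •
            TTPoly T n a ha1 (by omega) (by omega) v k η) ∧
    (∀ i : ℕ, ∀ hi1 : 1 ≤ i, ∀ hi2 : i < n - 1, i ≠ a → ∀ u : ℂ,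
      Tpoly T ⟨i - 1, by omega⟩ ⟨i, by omega⟩ u
        (TTPoly T n a ha1 (by omega) (by omega) v k η) = 0) ∧
    (∀ ρ : ℂ, ∀ q : Polynomial ℂ,
      (ν ⟨a - 1, by omega⟩).eval (-ρ) = 0 →
      ν ⟨a - 1, by omega⟩ = (Polynomial.X + Polynomial.C ρ) * q →
      (∀ u : ℂ,
        Tpoly T ⟨a - 1, by omega⟩ ⟨a - 1, by omega⟩ u
            (TTPoly T n a ha1 (by omega) (by omega) (-ρ) k η)
          = ((u + ρ - (k : ℂ)) * q.eval u) •
              TTPoly T n a ha1 (by omega) (by omega) (-ρ) k η) ∧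
      (∀ ha3 : a < n - 1, ∀ u : ℂ,
        Tpoly T ⟨a - 1, by omega⟩ ⟨a, by omega⟩ u
          (TTPoly T n a ha1 (by omega) (by omega) (-ρ) k η) = 0)) := by
  have hA : Set.Ioo (⟨a - 1, by lia⟩ : Fin n) ⟨n - 1, by lia⟩
      ⊆ Set.range (idxSeq n a (n - a) (by lia)) :=
    fun i hi ↦ (Yangian.mem_range_idxSeq _).2 (by grind)
  have hB : Set.range (idxSeq n (a - 1) (n - a) (by lia))
      = Set.Ico (⟨a - 1, by lia⟩ : Fin n) ⟨n - 1, by lia⟩ :=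
    Set.ext fun i ↦ (Yangian.mem_range_idxSeq _).trans (by grind)
  have haction := lowering_operator_action_on_singular_general (Yangian.satisfiesRTT_Tpoly hT hvan)
    Yangian.isWeaklyPolynomial_Tpoly_apply hA hB (ν := ν) (ζ := η) (fun i ↦
      Yangian.isRowSingular_iff.2 ⟨fun hi u ↦ hdiagν u i hi, fun j hj u ↦ hsing u i j hj.1 hj.2⟩) k
  simp only [Yangian.TTPoly_eq_quantumMinorProd]
  refine ⟨fun i _ hi hia u ↦ ?_, fun i _ hi hia u ↦ ?_, fun ρ q _ hq ↦ ?_⟩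
  · exact ((haction v).1 _ (by grind)).apply_self (by grind) u
  · exact ((haction v).1 _ (by grind)).apply_eq_zero (by grind) u
  · have h := (haction (-ρ)).2 q (by simpa using hq)
    refine ⟨fun u ↦ ?_, fun _ u ↦ h.apply_eq_zero (by grind) u⟩
    rw [h.apply_self (by grind) u]
    simp [sub_eq_add_neg, add_left_comm, add_comm]
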